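/- Let C be an s-extremal singly even self-dual [60,30,12] code (so its shadow has minimum weight 10), and suppose that the coset C₁ contains no vector of weight 10. Then the neighbor N₃(C) = C₀ ∪ C₃ is an s-extremal singly even self-dual [60,30,10] code; that is, N₃(C) is singly even self-dual with minimum weight 10 and its shadow C₂ ∪ C₁ has minimum weight 14. -/

import Mathlib

open Finset

/-- Hamming weight of a binary vector. -/
def wt {n : ℕ} (x : Fin n → ZMod 2) : ℕ := hammingNorm x

/-- The dual of a set of binary vectors with respect to the standard inner product. -/
def dualSet {n : ℕ} (C : Set (Fin n → ZMod 2)) : Set (Fin n → ZMod 2) :=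
  {x | ∀ y ∈ C, ∑ i, x i * y i = 0}

/-- A binary linear code is self-dual if it equals its dual code. -/
def IsSelfDual {n : ℕ} (C : Submodule (ZMod 2) (Fin n → ZMod 2)) : Prop :=
  (C : Set (Fin n → ZMod 2)) = dualSet (C : Set (Fin n → ZMod 2))

/-- A self-dual code is singly even if some codeword has weight not divisible by 4. -/
def IsSinglyEvenSelfDual {n : ℕ} (C : Submodule (ZMod 2) (Fin n → ZMod 2)) : Prop :=
  IsSelfDual C ∧ ∃ x ∈ C, ¬ (4 ∣ wt x)

/-- The doubly even subcode `C₀` of `C` (as a set): codewords of weight ≡ 0 (mod 4). -/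
def evenSub {n : ℕ} (C : Submodule (ZMod 2) (Fin n → ZMod 2)) : Set (Fin n → ZMod 2) :=
  {x | x ∈ C ∧ 4 ∣ wt x}

/-- The shadow `S = C₀^⊥ \ C` of a singly even self-dual code. -/
def shadow {n : ℕ} (C : Submodule (ZMod 2) (Fin n → ZMod 2)) : Set (Fin n → ZMod 2) :=
  dualSet (evenSub C) \ (C : Set (Fin n → ZMod 2))

/-- The minimum (nonzero) weight of a set of vectors. -/
noncomputable def minWtSet {n : ℕ} (S : Set (Fin n → ZMod 2)) : ℕ :=
  sInf {w | ∃ x ∈ S, x ≠ 0 ∧ wt x = w}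

/-- The minimum weight of a code. -/
noncomputable def minWt {n : ℕ} (C : Submodule (ZMod 2) (Fin n → ZMod 2)) : ℕ :=
  minWtSet (C : Set (Fin n → ZMod 2))

/-- A singly even self-dual code of length `n` is s-extremal if
`d(S) = n/2 + 4 - 2 d(C)`. -/
def IsSExtremal {n : ℕ} (C : Submodule (ZMod 2) (Fin n → ZMod 2)) : Prop :=
  IsSinglyEvenSelfDual C ∧
    (minWtSet (shadow C) : ℤ) = ((n / 2 : ℕ) : ℤ) + 4 - 2 * (minWt C : ℤ)

/-- Two codes are equivalent if one is obtained from the other by permuting coordinates. -/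
def CodeEquiv {n : ℕ} (C D : Submodule (ZMod 2) (Fin n → ZMod 2)) : Prop :=
  ∃ σ : Equiv.Perm (Fin n),
    Submodule.map (LinearMap.funLeft (ZMod 2) (ZMod 2) σ) C = D

/-- The neighbor `C₀ ∪ (t + C₀)` of `C` obtained from a shadow vector `t`:
the span of the doubly even subcode together with `t`. -/
def neighborCode {n : ℕ} (C : Submodule (ZMod 2) (Fin n → ZMod 2))
    (t : Fin n → ZMod 2) : Submodule (ZMod 2) (Fin n → ZMod 2) :=
  Submodule.span (ZMod 2) (evenSub C ∪ {t})

/-- inner product -/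
def dt {n : ℕ} (x y : Fin n → ZMod 2) : ZMod 2 := ∑ i, x i * y i

theorem dt_comm {n : ℕ} (x y : Fin n → ZMod 2) : dt x y = dt y x := by
  simp [dt, mul_comm]

theorem dt_add_left {n : ℕ} (x y z : Fin n → ZMod 2) : dt (x + y) z = dt x z + dt y z := by
  simp [dt, add_mul, Finset.sum_add_distrib]

theorem dt_add_right {n : ℕ} (x y z : Fin n → ZMod 2) : dt x (y + z) = dt x y + dt x z := by
  simp [dt, mul_add, Finset.sum_add_distrib]

theorem z2_cases (a : ZMod 2) : a = 0 ∨ a = 1 := by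
  revert a; decide

theorem add_self2 {n : ℕ} (x : Fin n → ZMod 2) : x + x = 0 := by
  funext i
  exact CharTwo.add_self_eq_zero (x i)

theorem add_cancel2 {n : ℕ} (x y : Fin n → ZMod 2) : x + y + y = x := by
  rw [add_assoc, add_self2, add_zero]

theorem wt_eq_sum {n : ℕ} (x : Fin n → ZMod 2) : wt x = ∑ i, (x i).val := by
  have h : ∀ a : ZMod 2, a.val = if a ≠ 0 then 1 else 0 := by decide
  simp only [wt, hammingNorm, h, Finset.card_filter]

theorem wt_add {n : ℕ} (x y : Fin n → ZMod 2) :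
    ∃ m : ℕ, (m : ZMod 2) = dt x y ∧ wt (x + y) + 2 * m = wt x + wt y := by
  refine ⟨∑ i, (x i * y i).val, ?_, ?_⟩
  · simp [dt]
  · have h : ∀ a b : ZMod 2, (a + b).val + 2 * (a * b).val = a.val + b.val := by decide
    simp only [wt_eq_sum, Finset.mul_sum, ← Finset.sum_add_distrib, Pi.add_apply, h]

theorem wt_add0 {n : ℕ} {x y : Fin n → ZMod 2} (h : dt x y = 0) :
    wt (x + y) % 4 = (wt x + wt y) % 4 := by
  obtain ⟨m, h1, h2⟩ := wt_add x y
  rw [h, ZMod.natCast_eq_zero_iff] at h1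
  omega

theorem wt_add1 {n : ℕ} {x y : Fin n → ZMod 2} (h : dt x y = 1) :
    wt (x + y) % 4 = (wt x + wt y + 2) % 4 := by
  obtain ⟨m, h1, h2⟩ := wt_add x y
  have h3 : m % 2 = 1 := by
    rcases Nat.mod_two_eq_zero_or_one m with h0 | h0
    · have : (m : ZMod 2) = 0 := (ZMod.natCast_eq_zero_iff _ _).2 (Nat.dvd_of_mod_eq_zero h0)
      rw [this] at h1
      rw [h] at h1
      exact absurd h1 (by decide)
    · exact h0
  omega

theorem dt_self {n : ℕ} (x : Fin n → ZMod 2) : dt x x = (wt x : ZMod 2) := by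
  have h : ∀ a : ZMod 2, a * a = a := by decide
  simp [dt, h, wt_eq_sum]

theorem dt_one {n : ℕ} (x : Fin n → ZMod 2) : dt 1 x = (wt x : ZMod 2) := by
  simp [dt, wt_eq_sum]

theorem wt_compl {n : ℕ} (x : Fin n → ZMod 2) : wt (x + 1) + wt x = n := by
  have h : ∀ a : ZMod 2, (a + 1).val + a.val = 1 := by decide
  simp [wt_eq_sum, ← Finset.sum_add_distrib, h]

/-- sign character -/
def sg (a : ZMod 2) : ℤ := if a = 0 then 1 else -1

theorem sg_add (a b : ZMod 2) : sg (a + b) = sg a * sg b := by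
  revert a b; decide

theorem sg_sum {ι : Type*} (s : Finset ι) (f : ι → ZMod 2) :
    sg (∑ i ∈ s, f i) = ∏ i ∈ s, sg (f i) := by
  classical
  induction s using Finset.induction_on with
  | empty => simp [sg]
  | insert a s ha ih => rw [Finset.sum_insert ha, Finset.prod_insert ha, sg_add, ih]

theorem sum_sg {n : ℕ} (v : Fin n → ZMod 2) : ∑ i, sg (v i) = (n : ℤ) - 2 * (wt v : ℤ) := by
  have h : ∀ a : ZMod 2, sg a = 1 - 2 * (a.val : ℤ) := by decide
  simp [wt_eq_sum, h, Finset.sum_sub_distrib, Finset.mul_sum]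

theorem wt_single_sum {n k : ℕ} (s : Finset (Fin k)) (p : Fin k → Fin n) :
    wt (∑ j ∈ s, Pi.single (p j) (1 : ZMod 2) : Fin n → ZMod 2) ≤ s.card := by
  classical
  induction s using Finset.induction_on with
  | empty => simp [wt]
  | insert a s ha ih =>
    rw [Finset.sum_insert ha, Finset.card_insert_of_notMem ha]
    obtain ⟨m, -, h2⟩ := wt_add (Pi.single (p a) (1 : ZMod 2) : Fin n → ZMod 2)
      (∑ j ∈ s, Pi.single (p j) (1 : ZMod 2))
    have h3 : wt (Pi.single (p a) (1 : ZMod 2) : Fin n → ZMod 2) = 1 := by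
      rw [wt_eq_sum, Finset.sum_eq_single (p a)]
      · simp [ZMod.val_one]
      · intro b _ hb
        simp [hb]
      · simp
    omega

/-- number of index tuples whose unit vectors cancel -/
def Mk (n k : ℕ) : ℕ :=
  (Finset.univ.filter fun p : Fin k → Fin n =>
    (∑ j, Pi.single (p j) (1 : ZMod 2) : Fin n → ZMod 2) = 0).card

theorem moment {n : ℕ} (T : Finset (Fin n → ZMod 2)) (k : ℕ)
    (hT : ∀ u : Fin n → ZMod 2, u ≠ 0 → wt u ≤ k → ∑ v ∈ T, sg (dt u v) = 0) :
    ∑ v ∈ T, ((n : ℤ) - 2 * (wt v : ℤ)) ^ k = T.card * Mk n k := by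
  have h1 : ∀ v : Fin n → ZMod 2, ((n : ℤ) - 2 * (wt v : ℤ)) ^ k
      = ∑ p : Fin k → Fin n, sg (dt (∑ j, Pi.single (p j) (1 : ZMod 2)) v) := by
    intro v
    rw [← sum_sg, Fintype.sum_pow]
    refine Finset.sum_congr rfl fun p _ => ?_
    rw [← sg_sum]
    congr 1
    have : ∀ s : Finset (Fin k), ∑ j ∈ s, v (p j)
        = dt (∑ j ∈ s, Pi.single (p j) (1 : ZMod 2)) v := by
      intro s
      classical
      induction s using Finset.induction_on with
      | empty => simp [dt]
      | insert a s ha ih =>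
        rw [Finset.sum_insert ha, Finset.sum_insert ha, dt_add_left, ih]
        congr 1
        simp [dt, Pi.single_apply]
    exact this _
  simp only [h1]
  rw [Finset.sum_comm]
  have h2 : ∀ p : Fin k → Fin n,
      ∑ v ∈ T, sg (dt (∑ j, Pi.single (p j) (1 : ZMod 2)) v)
      = if (∑ j, Pi.single (p j) (1 : ZMod 2) : Fin n → ZMod 2) = 0 then (T.card : ℤ) else 0 := by
    intro p
    split_ifs with h
    · rw [h]
      simp [dt, sg]
    · refine hT _ h ?_
      simpa using wt_single_sum Finset.univ p
  simp only [h2]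
  rw [← Finset.sum_filter, Finset.sum_const, nsmul_eq_mul, Mk, mul_comm]

/-- annihilating polynomial -/
def FF (s : ℤ) : ℤ := s ^ 8 - 896 * s ^ 6 + 200704 * s ^ 4 - 9437184 * s ^ 2

theorem sum_FF (T : Finset (Fin 60 → ZMod 2))
    (hT : ∀ u : Fin 60 → ZMod 2, u ≠ 0 → wt u ≤ 8 → ∑ v ∈ T, sg (dt u v) = 0) :
    ∑ v ∈ T, FF (60 - 2 * (wt v : ℤ)) =
      T.card * ((Mk 60 8 : ℤ) - 896 * Mk 60 6 + 200704 * Mk 60 4 - 9437184 * Mk 60 2) := by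
  simp only [FF, Finset.sum_add_distrib, Finset.sum_sub_distrib, ← Finset.mul_sum]
  have hm := fun k => moment T k
  push_cast at hm
  rw [hm 8 hT, hm 6 fun u h h' => hT u h (by omega),
    hm 4 fun u h h' => hT u h (by omega), hm 2 fun u h h' => hT u h (by omega)]
  ring

theorem char_sum_zero {n : ℕ} (T : Finset (Fin n → ZMod 2)) (u d : Fin n → ZMod 2)
    (hd : dt u d = 1) (hT : ∀ v ∈ T, v + d ∈ T) : ∑ v ∈ T, sg (dt u v) = 0 := by
  refine Finset.sum_involution (fun v _ => v + d) ?_ ?_ (fun v hv => hT v hv) ?_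
  · intro v _
    rw [dt_add_right, hd]
    have : ∀ a : ZMod 2, sg a + sg (a + 1) = 0 := by decide
    exact this _
  · intro v _ _ h
    have : d = 0 := by simpa using h
    rw [this] at hd
    simp [dt] at hd
  · intro v _
    exact add_cancel2 v d

theorem exists_dt_one {n : ℕ} (u : Fin n → ZMod 2) (hu : u ≠ 0) : ∃ d, dt u d = 1 := by
  obtain ⟨i, hi⟩ := Function.ne_iff.1 hu
  refine ⟨Pi.single i 1, ?_⟩
  rcases z2_cases (u i) with h | h
  · exact absurd h hi
  · simp [dt, Pi.single_apply, h]

theorem sum_univ_wt {n : ℕ} (f : ℕ → ℤ) :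
    ∑ v : Fin n → ZMod 2, f (wt v) = ∑ m ∈ Finset.range (n + 1), (Nat.choose n m) • f m := by
  have h := Finset.sum_powerset_apply_card f (x := (Finset.univ : Finset (Fin n)))
  rw [Finset.card_univ, Fintype.card_fin] at h
  rw [← h]
  refine Finset.sum_bij' (fun v _ => Finset.univ.filter fun i => v i ≠ 0)
    (fun s _ => fun i => if i ∈ s then 1 else 0) ?_ ?_ ?_ ?_ ?_
  · intro v _
    simp
  · intro s _
    exact Finset.mem_univ _
  · intro v _
    funext i
    rcases z2_cases (v i) with h | h <;> simp [h]
  · intro s _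
    ext i
    simp
  · intro v _
    rfl

theorem univ_char {n : ℕ} (u : Fin n → ZMod 2) (hu : u ≠ 0) :
    ∑ v, sg (dt u v) = 0 := by
  obtain ⟨d, hd⟩ := exists_dt_one u hu
  exact char_sum_zero _ u d hd fun v _ => Finset.mem_univ _

theorem exists_finset {n : ℕ} (S : Set (Fin n → ZMod 2)) :
    ∃ T : Finset (Fin n → ZMod 2), ∀ v, v ∈ T ↔ v ∈ S := by
  classical
  exact ⟨Finset.univ.filter fun v => v ∈ S, by simp⟩

theorem M_ne : ((Mk 60 8 : ℤ) - 896 * Mk 60 6 + 200704 * Mk 60 4 - 9437184 * Mk 60 2) ≠ 0 := by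
  intro h0
  have h := sum_FF Finset.univ (fun u hu _ => univ_char u hu)
  rw [h0, mul_zero, sum_univ_wt fun m => FF (60 - 2 * (m : ℤ))] at h
  revert h
  simp only [FF]
  decide +kernel

theorem minWtSet_spec {n : ℕ} {S : Set (Fin n → ZMod 2)} {k : ℕ} (h : minWtSet S = k)
    (hk : k ≠ 0) : (∃ x ∈ S, x ≠ 0 ∧ wt x = k) ∧ ∀ x ∈ S, x ≠ 0 → k ≤ wt x := by
  have hne : {w | ∃ x ∈ S, x ≠ 0 ∧ wt x = w}.Nonempty := by
    by_contra hcon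
    rw [Set.not_nonempty_iff_eq_empty] at hcon
    rw [minWtSet, hcon, Nat.sInf_empty] at h
    exact hk h.symm
  have h1 := Nat.sInf_mem hne
  constructor
  · rw [← h]
    exact h1
  · intro x hx h0
    rw [← h]
    exact Nat.sInf_le ⟨x, hx, h0, rfl⟩

theorem minWtSet_intro {n : ℕ} {S : Set (Fin n → ZMod 2)} {k : ℕ}
    (h1 : ∃ x ∈ S, x ≠ 0 ∧ wt x = k) (h2 : ∀ x ∈ S, x ≠ 0 → k ≤ wt x) : minWtSet S = k := by
  apply le_antisymm
  · exact Nat.sInf_le h1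
  · refine le_csInf ⟨k, h1⟩ ?_
    rintro w ⟨x, hx, h0, rfl⟩
    exact h2 x hx h0

/-- If `C` is an s-extremal singly even self-dual `[60, 30, 12]` code (shadow minimum
weight 10) whose shadow coset `C₁ = t₁ + C₀` contains no vector of weight 10, then the
neighbor `N₃(C) = C₀ ∪ C₃ = C₀ ∪ (t₃ + C₀)` (for `t₃` a shadow vector in the other coset)
is an s-extremal singly even self-dual `[60, 30, 10]` code: it is singly even self-dual
with minimum weight 10 and its shadow has minimum weight 14. -/
theorem sExtremal_60_neighbor (C : Submodule (ZMod 2) (Fin 60 → ZMod 2))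
    (hse : IsSinglyEvenSelfDual C)
    (hdim : Module.finrank (ZMod 2) C = 30)
    (hd : minWt C = 12)
    (hshadow : minWtSet (shadow C) = 10)
    (t₁ t₃ : Fin 60 → ZMod 2)
    (ht₁ : t₁ ∈ shadow C) (ht₃ : t₃ ∈ shadow C)
    (hdiff : t₁ + t₃ ∉ evenSub C)
    (hC₁ : ∀ c ∈ evenSub C, wt (t₁ + c) ≠ 10) :
    IsSinglyEvenSelfDual (neighborCode C t₃) ∧
    Module.finrank (ZMod 2) (neighborCode C t₃) = 30 ∧
    minWt (neighborCode C t₃) = 10 ∧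
    minWtSet (shadow (neighborCode C t₃)) = 14 := by
  obtain ⟨hsd, z, hzC, hz4⟩ := hse
  have hmem : ∀ x, x ∈ C ↔ ∀ y ∈ C, dt x y = 0 := by
    intro x
    have := Set.ext_iff.1 hsd x
    exact this
  have heven : ∀ x : Fin 60 → ZMod 2, dt x x = 0 → wt x % 2 = 0 := by
    intro x hx
    rw [dt_self, ZMod.natCast_eq_zero_iff] at hx
    omega
  have hCC : ∀ x ∈ C, ∀ y ∈ C, dt x y = 0 := fun x hx => (hmem x).1 hx
  have hCev : ∀ x ∈ C, wt x % 2 = 0 := fun x hx => heven x (hCC x hx x hx)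
  have hmod : ∀ x ∈ C, x ∉ evenSub C → wt x % 4 = 2 := by
    intro x hx h
    have h1 := hCev x hx
    have h2 : ¬ (4 ∣ wt x) := fun h4 => h ⟨hx, h4⟩
    omega
  -- the doubly even subcode
  have hadd : ∀ x ∈ evenSub C, ∀ y ∈ evenSub C, x + y ∈ evenSub C := by
    rintro x ⟨hx, hx4⟩ y ⟨hy, hy4⟩
    refine ⟨C.add_mem hx hy, ?_⟩
    have := wt_add0 (hCC x hx y hy)
    omega
  have hadd2 : ∀ x ∈ C, x ∉ evenSub C → ∀ y ∈ C, y ∉ evenSub C → x + y ∈ evenSub C := by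
    intro x hx hx' y hy hy'
    refine ⟨C.add_mem hx hy, ?_⟩
    have := wt_add0 (hCC x hx y hy)
    have := hmod x hx hx'
    have := hmod y hy hy'
    omega
  have h0 : (0 : Fin 60 → ZMod 2) ∈ evenSub C := ⟨C.zero_mem, by simp [wt]⟩
  let C0 : Submodule (ZMod 2) (Fin 60 → ZMod 2) :=
    { carrier := evenSub C
      add_mem' := fun {x y} hx hy => hadd x hx y hy
      zero_mem' := h0
      smul_mem' := by
        intro c x hx
        rcases z2_cases c with h | h
        · rw [h, zero_smul]; exact h0
        · rw [h, one_smul]; exact hx }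
  have hC0 : ∀ x, x ∈ C0 ↔ x ∈ evenSub C := fun x => Iff.rfl
  have hzE : z ∉ evenSub C := fun h => hz4 h.2
  -- shadow basics
  have hdual : ∀ t ∈ dualSet (evenSub C), ∀ c ∈ evenSub C, dt t c = 0 := fun t ht c hc => ht c hc
  have hS0 : ∀ t ∈ shadow C, ∀ c ∈ evenSub C, dt t c = 0 := fun t ht => hdual t ht.1
  have hS1 : ∀ t ∈ shadow C, ∀ c ∈ C, c ∉ evenSub C → dt t c = 1 := by
    intro t ht c hc hc'
    rcases z2_cases (dt t c) with h | h
    · exfalso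
      apply ht.2
      refine (hmem t).2 fun y hy => ?_
      by_cases hy' : y ∈ evenSub C
      · exact hS0 t ht y hy'
      · have := hS0 t ht _ (hadd2 y hy hy' c hc hc')
        rwa [dt_add_right, h, add_zero] at this
    · exact h
  have hSS : ∀ t ∈ shadow C, ∀ t' ∈ shadow C, t + t' ∈ C := by
    intro t ht t' ht'
    refine (hmem _).2 fun y hy => ?_
    rw [dt_add_left]
    by_cases hy' : y ∈ evenSub C
    · rw [hS0 t ht y hy', hS0 t' ht' y hy', add_zero]
    · rw [hS1 t ht y hy hy', hS1 t' ht' y hy hy']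
      decide
  have hSC : ∀ t ∈ shadow C, ∀ c ∈ evenSub C, t + c ∈ shadow C := by
    intro t ht c hc
    refine ⟨fun y hy => ?_, fun h => ht.2 ?_⟩
    · change dt (t + c) y = 0
      rw [dt_add_left, hS0 t ht y hy, hCC c hc.1 y hy.1, add_zero]
    · have := C.add_mem h hc.1
      rwa [add_cancel2] at this
  obtain ⟨⟨s, hs, hsne, hs10⟩, hSmin⟩ := minWtSet_spec hshadow (by norm_num)
  obtain ⟨-, hCmin⟩ := minWtSet_spec (S := (C : Set (Fin 60 → ZMod 2))) hd (by norm_num)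
  have hSne : ∀ t ∈ shadow C, t ≠ 0 := by
    rintro t ht rfl
    exact ht.2 C.zero_mem
  have hSmod : ∀ t ∈ shadow C, wt t % 4 = 2 := by
    intro t ht
    have hc := hSS s hs t ht
    have hst : s + (s + t) = t := by rw [← add_assoc, add_self2, zero_add]
    by_cases hc' : s + t ∈ evenSub C
    · have := wt_add0 (hS0 s hs _ hc')
      rw [hst] at this
      have := hc'.2
      omega
    · have := wt_add1 (hS1 s hs _ hc hc')
      rw [hst] at this
      have := hmod _ hc hc'
      omega
  -- two cosets
  have h13 : t₁ + t₃ ∈ C := hSS t₁ ht₁ t₃ ht₃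
  have hcos : ∀ v ∈ shadow C, v + t₁ ∈ evenSub C ∨ v + t₃ ∈ evenSub C := by
    intro v hv
    by_cases h : v + t₁ ∈ evenSub C
    · exact Or.inl h
    · right
      have := hadd2 _ (hSS v hv t₁ ht₁) h _ h13 hdiff
      rwa [← add_assoc, add_cancel2] at this
  have hnot10 : ∀ v, v + t₁ ∈ evenSub C → wt v ≠ 10 := by
    intro v hv
    have := hC₁ _ hv
    rwa [add_comm t₁, add_cancel2] at this
  -- the neighbor
  set D := neighborCode C t₃ with hD
  have hDsup : D = C0 ⊔ Submodule.span (ZMod 2) {t₃} := by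
    rw [hD, neighborCode, Submodule.span_union]
    congr 1
    exact Submodule.span_eq C0
  have hDmem : ∀ v, v ∈ D ↔ v ∈ evenSub C ∨ v + t₃ ∈ evenSub C := by
    intro v
    rw [hDsup, Submodule.mem_sup]
    constructor
    · rintro ⟨y, hy, w, hw, rfl⟩
      obtain ⟨a, rfl⟩ := Submodule.mem_span_singleton.1 hw
      rcases z2_cases a with h | h
      · left
        rw [h, zero_smul, add_zero]
        exact hy
      · right
        rw [h, one_smul, add_cancel2]
        exact hy
    · rintro (h | h)
      · exact ⟨v, h, 0, Submodule.zero_mem _, add_zero v⟩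
      · exact ⟨v + t₃, h, t₃, Submodule.mem_span_singleton_self _, add_cancel2 _ _⟩
  have hCsup : C = C0 ⊔ Submodule.span (ZMod 2) {z} := by
    apply le_antisymm
    · intro v hv
      rw [Submodule.mem_sup]
      by_cases h : v ∈ evenSub C
      · exact ⟨v, h, 0, Submodule.zero_mem _, add_zero v⟩
      · exact ⟨v + z, hadd2 v hv h z hzC hzE, z, Submodule.mem_span_singleton_self _,
          add_cancel2 _ _⟩
    · refine sup_le (fun v hv => hv.1) ?_
      rw [Submodule.span_singleton_le_iff_mem]
      exact hzC
  have ht₃E : t₃ ∉ evenSub C := fun h => ht₃.2 h.1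
  have hfin : Module.finrank (ZMod 2) D = 30 := by
    have h1 := Submodule.finrank_sup_span_singleton (p := C0) (v := z) hzE
    have h2 := Submodule.finrank_sup_span_singleton (p := C0) (v := t₃) ht₃E
    rw [← hCsup, hdim] at h1
    rw [← hDsup] at h2
    omega
  have ht₃D : t₃ ∈ D := (hDmem _).2 (Or.inr (by rw [add_self2]; exact h0))
  have hself3 : dt t₃ t₃ = 0 := by
    rw [dt_self, ZMod.natCast_eq_zero_iff]
    have := hSmod t₃ ht₃
    omega
  have hDC3 : ∀ v, v + t₃ ∈ evenSub C → v ∈ shadow C := by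
    intro v hv
    have := hSC t₃ ht₃ _ hv
    rwa [add_comm t₃, add_cancel2] at this
  have hC0D : ∀ v ∈ evenSub C, v ∈ D := fun v hv => (hDmem v).2 (Or.inl hv)
  -- sums of a shadow vector and D
  have hDdual : ∀ x, x ∈ D ↔ ∀ y ∈ D, dt x y = 0 := by
    intro x
    constructor
    · intro hx
      have hx0 : ∀ c ∈ evenSub C, dt x c = 0 := by
        intro c hc
        rcases (hDmem x).1 hx with h | h
        · exact hCC x h.1 c hc.1
        · exact hS0 x (hDC3 x h) c hc
      have hx3 : dt x t₃ = 0 := by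
        rcases (hDmem x).1 hx with h | h
        · rw [dt_comm]
          exact hS0 t₃ ht₃ x h
        · have := hS0 t₃ ht₃ _ h
          rwa [dt_add_right, hself3, add_zero, dt_comm] at this
      intro y hy
      rcases (hDmem y).1 hy with h | h
      · exact hx0 y h
      · have := hx0 _ h
        rwa [dt_add_right, hx3, add_zero] at this
    · intro hx
      rw [hDmem]
      have hx3 := hx t₃ ht₃D
      by_cases hxC : x ∈ C
      · left
        by_contra h
        have := hS1 t₃ ht₃ x hxC h
        rw [dt_comm, hx3] at this
        exact absurd this (by decide)
      · right
        have hxS : x ∈ shadow C := ⟨fun y hy => hx y (hC0D y hy), hxC⟩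
        by_contra h
        have := hS1 t₃ ht₃ _ (hSS x hxS t₃ ht₃) h
        rw [dt_add_right, dt_comm, hx3, hself3] at this
        exact absurd this (by decide)
  have hDmin : ∀ x ∈ D, x ≠ 0 → 10 ≤ wt x := by
    intro x hx hx0
    rcases (hDmem x).1 hx with h | h
    · have := hCmin x h.1 hx0
      omega
    · exact hSmin x (hDC3 x h) hx0
  have hDeven : evenSub D = evenSub C := by
    ext x
    constructor
    · rintro ⟨hx, hx4⟩
      rcases (hDmem x).1 hx with h | h
      · exact h
      · have := hSmod x (hDC3 x h)
        omega
    · intro hx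
      exact ⟨hC0D x hx, hx.2⟩
  have hSD : shadow D = dualSet (evenSub C) \ (D : Set (Fin 60 → ZMod 2)) := by
    rw [_root_.shadow, hDeven]
  have hSDprop : ∀ v ∈ shadow D, wt v % 4 = 2 ∧ 14 ≤ wt v := by
    intro v hv
    rw [hSD] at hv
    obtain ⟨hv1, hv2⟩ := hv
    have hv2' : v ∉ evenSub C ∧ v + t₃ ∉ evenSub C := by
      have : ¬ (v ∈ evenSub C ∨ v + t₃ ∈ evenSub C) := fun h => hv2 ((hDmem v).2 h)
      exact not_or.1 this
    by_cases hvC : v ∈ C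
    · have h1 := hmod v hvC hv2'.1
      have h2 : v ≠ 0 := by
        rintro rfl
        exact hv2'.1 h0
      have := hCmin v hvC h2
      omega
    · have hvS : v ∈ shadow C := ⟨hv1, hvC⟩
      have h1 := hSmod v hvS
      have h2 := hSmin v hvS (hSne v hvS)
      have h3 := hnot10 v ((hcos v hvS).resolve_right hv2'.2)
      omega
  have hSDadd : ∀ v ∈ shadow D, ∀ d ∈ D, v + d ∈ shadow D := by
    intro v hv d hd
    rw [hSD] at hv ⊢
    refine ⟨fun y hy => ?_, fun h => hv.2 ?_⟩
    · change dt (v + d) y = 0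
      rw [dt_add_left, hdual v hv.1 y hy, (hDdual d).1 hd y (hC0D y hy), add_zero]
    · have := D.add_mem h hd
      rwa [add_cancel2] at this
  have hone : (1 : Fin 60 → ZMod 2) ∈ evenSub C := by
    refine ⟨(hmem 1).2 fun y hy => ?_, ?_⟩
    · rw [dt_one, ZMod.natCast_eq_zero_iff]
      exact Nat.dvd_of_mod_eq_zero (hCev y hy)
    · have h1 := wt_compl (0 : Fin 60 → ZMod 2)
      have h2 : wt (0 : Fin 60 → ZMod 2) = 0 := by simp [wt]
      rw [zero_add, h2] at h1
      omega
  have ht₁D : t₁ ∈ shadow D := by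
    rw [hSD]
    refine ⟨ht₁.1, fun h => ?_⟩
    rcases (hDmem _).1 h with h | h
    · exact ht₁.2 h.1
    · exact hdiff h
  have hex : ∃ v ∈ shadow D, wt v = 14 := by
    by_contra hcon
    push Not at hcon
    have hlow : ∀ v ∈ shadow D, wt v % 4 = 2 ∧ 18 ≤ wt v := by
      intro v hv
      have h1 := hSDprop v hv
      have h2 := hcon v hv
      omega
    classical
    obtain ⟨T, hT⟩ := exists_finset (_root_.shadow D)
    have hsum := sum_FF T (by
      intro u hu hu8
      have huD : u ∉ D := by
        intro h
        have := hDmin u h hu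
        omega
      rw [hDdual] at huD
      push Not at huD
      obtain ⟨d, hdD, hd1⟩ := huD
      refine char_sum_zero T u d ((z2_cases _).resolve_left hd1) fun v hv => ?_
      rw [hT] at hv ⊢
      exact hSDadd v hv d hdD)
    have hz : ∑ v ∈ T, FF (60 - 2 * (wt v : ℤ)) = 0 := by
      refine Finset.sum_eq_zero fun v hv => ?_
      rw [hT] at hv
      have h1 := hlow v hv
      have h2 := hlow _ (hSDadd v hv 1 (hC0D 1 hone))
      have h3 := wt_compl v
      have h4 : wt v = 18 ∨ wt v = 22 ∨ wt v = 26 ∨ wt v = 30 ∨ wt v = 34 ∨ wt v = 38 ∨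
          wt v = 42 := by omega
      rcases h4 with h | h | h | h | h | h | h <;> rw [h] <;> norm_num [FF]
    rw [hz] at hsum
    rcases mul_eq_zero.1 hsum.symm with h | h
    · have : T = ∅ := by
        rw [← Finset.card_eq_zero]
        exact_mod_cast h
      have h5 := (hT t₁).2 ht₁D
      rw [this] at h5
      simp at h5
    · exact M_ne h
  refine ⟨⟨?_, t₃, ht₃D, ?_⟩, hfin, ?_, ?_⟩
  · exact Set.ext hDdual
  · have := hSmod t₃ ht₃
    omega
  · refine minWtSet_intro ⟨s, ?_, hsne, hs10⟩ hDmin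
    refine (hDmem s).2 (Or.inr ((hcos s hs).resolve_left fun h => hnot10 s h hs10))
  · refine minWtSet_intro ?_ fun x hx _ => (hSDprop x hx).2
    obtain ⟨v, hv, hv14⟩ := hex
    refine ⟨v, hv, ?_, hv14⟩
    rintro rfl
    simp [wt] at hv14
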